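/- arXiv:2007.08703 — 2 statements merged into one kernel-verified Lean document; each statement's English description precedes it below -/
import Mathlib

section
/- Let f : ℝ^d → ℝ be integrable on [0,1)^d and let 𝒬 be a finite partition of [0,1)^d into measurable sets of positive Lebesgue measure. Fix η > 0 and suppose that for every q ∈ 𝒬 and every t > 0, μ({ a ∈ q : |f(a) − ⟨f⟩_q| > t }) ≤ μ(q) e^{−t}. Let δ > η·|𝒬| be f-admissible with associated value f^δ. Then there exists q ∈ 𝒬 such that f^δ ≤ ⟨f⟩_q + log( μ(q) / η ). -/
open MeasureTheory Set
open scoped ENNReal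

/-- The half-open unit cube `[0,1)^d` in `ℝ^d`. -/
def unitCube (d : ℕ) : Set (Fin d → ℝ) := Set.univ.pi fun _ => Set.Ico (0 : ℝ) 1

/-- Let `f` be integrable on `[0,1)^d` and `𝒬` a finite partition of
`[0,1)^d` into measurable sets of positive measure. Fix `η > 0` and suppose the
John–Nirenberg tail bound `μ {a ∈ q | |f a − ⟨f⟩_q| > t} ≤ μ(q) e^{−t}` holds for every
`q ∈ 𝒬` and `t > 0`. Then for every `f`-admissible `δ > η |𝒬|` with associated value
`f^δ`, there is `q ∈ 𝒬` with `f^δ ≤ ⟨f⟩_q + log(μ(q)/η)`. -/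
theorem stmt4 (d : ℕ) (f : (Fin d → ℝ) → ℝ)
    (hf : IntegrableOn f (unitCube d) volume)
    (𝒬 : Finset (Set (Fin d → ℝ)))
    (hmeas : ∀ q ∈ 𝒬, MeasurableSet q)
    (hpos : ∀ q ∈ 𝒬, 0 < volume q)
    (hdisj : ∀ q ∈ 𝒬, ∀ q' ∈ 𝒬, q ≠ q' → Disjoint q q')
    (hcover : ⋃ q ∈ 𝒬, q = unitCube d)
    (η : ℝ) (hη : 0 < η)
    (hJN : ∀ q ∈ 𝒬, ∀ t : ℝ, 0 < t →
      volume {a ∈ q | |f a - ⨍ y in q, f y| > t} ≤ volume q * ENNReal.ofReal (Real.exp (-t)))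
    (δ : ℝ) (hδ : δ > η * 𝒬.card)
    (Fδ : Set ℝ)
    (hFδ : Fδ = {z : ℝ | volume {a ∈ unitCube d | f a > z} = ENNReal.ofReal δ})
    (hne : Fδ.Nonempty) (hbdd : BddBelow Fδ) :
    ∃ q ∈ 𝒬, sInf Fδ ≤ (⨍ x in q, f x) + Real.log ((volume q).toReal / η) := by
  by_contra hcon
  push Not at hcon
  obtain ⟨z, hz⟩ := hne
  have hzs : sInf Fδ ≤ z := csInf_le hbdd hz
  rw [hFδ] at hz
  have hz' : volume {a ∈ unitCube d | f a > z} = ENNReal.ofReal δ := hz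
  have hcube : volume (unitCube d) = 1 := by
    unfold unitCube
    rw [Real.volume_pi_Ico]
    simp
  generalize sInf Fδ = s at hcon hzs
  have hq : ∀ q ∈ 𝒬, volume {a ∈ q | f a > s} ≤ ENNReal.ofReal η := by
    intro q hqQ
    have hsub : q ⊆ unitCube d := by
      rw [← hcover]
      exact Set.subset_biUnion_of_mem (u := fun q => q) hqQ
    have hfin : volume q ≠ ⊤ := by
      refine ne_top_of_le_ne_top ?_ (measure_mono hsub)
      rw [hcube]
      exact ENNReal.one_ne_top
    have hvpos : 0 < (volume q).toReal := ENNReal.toReal_pos (hpos q hqQ).ne' hfin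
    have hvq : volume q = ENNReal.ofReal (volume q).toReal := (ENNReal.ofReal_toReal hfin).symm
    by_cases hle : (volume q).toReal ≤ η
    · calc volume {a ∈ q | f a > s} ≤ volume q := measure_mono (fun a ha => ha.1)
        _ = ENNReal.ofReal (volume q).toReal := hvq
        _ ≤ ENNReal.ofReal η := ENNReal.ofReal_le_ofReal hle
    · have h1 := hcon q hqQ
      have hlog : 0 < Real.log ((volume q).toReal / η) :=
        Real.log_pos (by rw [lt_div_iff₀ hη]; linarith)
      have hJ := hJN q hqQ (Real.log ((volume q).toReal / η)) hlog
      refine (measure_mono ?_).trans (hJ.trans ?_)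
      · intro a ha
        refine ⟨ha.1, ?_⟩
        have h2 : f a > s := ha.2
        exact lt_of_lt_of_le (by linarith) (le_abs_self _)
      · rw [Real.exp_neg, Real.exp_log (by positivity), hvq,
          ← ENNReal.ofReal_mul ENNReal.toReal_nonneg]
        apply ENNReal.ofReal_le_ofReal
        rw [ENNReal.toReal_ofReal ENNReal.toReal_nonneg]
        apply le_of_eq
        field_simp
  have hmain : ENNReal.ofReal δ ≤ ENNReal.ofReal (η * 𝒬.card) := by
    calc ENNReal.ofReal δ = volume {a ∈ unitCube d | f a > z} := hz'.symm
      _ ≤ volume (⋃ q ∈ 𝒬, {a ∈ q | f a > s}) := by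
        apply measure_mono
        rintro a ⟨ha, hfa⟩
        rw [← hcover] at ha
        simp only [Set.mem_iUnion] at ha ⊢
        obtain ⟨q, hqQ, haq⟩ := ha
        exact ⟨q, hqQ, haq, lt_of_le_of_lt hzs hfa⟩
      _ ≤ ∑ q ∈ 𝒬, volume {a ∈ q | f a > s} := measure_biUnion_finset_le _ _
      _ ≤ ∑ q ∈ 𝒬, ENNReal.ofReal η := Finset.sum_le_sum hq
      _ = ENNReal.ofReal (η * 𝒬.card) := by
        rw [Finset.sum_const, nsmul_eq_mul, mul_comm, ENNReal.ofReal_mul hη.le,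
          ENNReal.ofReal_natCast]
  have h0 : 0 ≤ η * 𝒬.card := by positivity
  have := (ENNReal.ofReal_le_ofReal_iff h0).1 hmain
  linarith
end

section
/- Let f : ℝ^d → ℝ be locally integrable and let C ≥ 0 be such that for every axis-parallel rectangle q' ⊆ [0,1)^d of positive Lebesgue measure, (1/μ(q')) ∫_{q'} |f − ⟨f⟩_{q'}| dμ ≤ C. Let η ∈ (0,1] and let q ⊆ [0,1)^d be an axis-parallel rectangle with μ(q) ≥ η. Then |⟨f⟩_q − ⟨f⟩_{[0,1)^d}| ≤ 2 ⌈log₂(1/η)⌉ C. -/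
open MeasureTheory Set
open scoped ENNReal

/-- An axis-parallel rectangle in `ℝ^d`: a product of (half-open) intervals. -/
def IsRect {d : ℕ} (q : Set (Fin d → ℝ)) : Prop :=
  ∃ a b : Fin d → ℝ, q = Set.univ.pi fun i => Set.Ico (a i) (b i)

/-- One step of the chain. -/
lemma step_aux {d : ℕ} (f : (Fin d → ℝ) → ℝ) (C : ℝ) (q q' : Set (Fin d → ℝ))
    (hsub : q ⊆ q') 
    (hfin : volume q' ≠ ⊤) (hpos : 0 < volume.real q)
    (h2 : volume.real q' ≤ 2 * volume.real q) (hint : IntegrableOn f q')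
    (hB : ⨍ x in q', |f x - ⨍ y in q', f y| ≤ C) :
    |(⨍ x in q, f x) - ⨍ x in q', f x| ≤ 2 * C := by
  set c := ⨍ x in q', f x with hc
  have hfinq : volume q ≠ ⊤ := ne_top_of_le_ne_top hfin (measure_mono hsub)
  have hi : IntegrableOn (fun x => f x - c) q' :=
    hint.sub (integrableOn_const hfin)
  have hpos' : 0 < volume.real q' := lt_of_lt_of_le hpos (measureReal_mono hsub hfin)
  have e1 : (⨍ x in q, f x) - c = (volume.real q)⁻¹ * ∫ x in q, (f x - c) := by
    rw [integral_sub (hint.mono_set hsub) (integrableOn_const hfinq), setAverage_eq,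
      setIntegral_const, smul_eq_mul, smul_eq_mul]
    field_simp
  have e2 : |∫ x in q, (f x - c)| ≤ ∫ x in q', |f x - c| := by
    refine (abs_integral_le_integral_abs).trans ?_
    exact setIntegral_mono_set hi.abs (Filter.Eventually.of_forall fun x => abs_nonneg _)
      (Filter.Eventually.of_forall hsub)
  rw [setAverage_eq, smul_eq_mul, inv_mul_le_iff₀ hpos'] at hB
  have hC : 0 ≤ C := by
    have : 0 ≤ ∫ x in q', |f x - c| := integral_nonneg fun x => abs_nonneg _
    by_contra h
    push Not at h
    nlinarith
  rw [e1, abs_mul, abs_of_pos (inv_pos.2 hpos), inv_mul_le_iff₀ hpos]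
  nlinarith

lemma chain_aux (d : ℕ) (f : (Fin d → ℝ) → ℝ) (hf : LocallyIntegrable f volume)
    (C : ℝ) (hC : 0 ≤ C)
    (hBMO : ∀ q' : Set (Fin d → ℝ), IsRect q' → q' ⊆ unitCube d → 0 < volume q' →
      ⨍ x in q', |f x - ⨍ y in q', f y| ≤ C) (k : ℕ) :
    ∀ a b : Fin d → ℝ, (∀ i, 0 ≤ a i) → (∀ i, a i ≤ b i) → (∀ i, b i ≤ 1) →
      1 ≤ 2 ^ k * ∏ i, (b i - a i) →
      |(⨍ x in (Set.univ.pi fun i => Set.Ico (a i) (b i)), f x) - ⨍ x in unitCube d, f x|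
        ≤ 2 * (k : ℝ) * C := by
  have hvol : ∀ a b : Fin d → ℝ, (∀ i, a i ≤ b i) →
      volume.real (Set.univ.pi fun i => Set.Ico (a i) (b i)) = ∏ i, (b i - a i) :=
    fun a b h => Real.volume_pi_Ico_toReal h
  have hfin : ∀ a b : Fin d → ℝ,
      volume (Set.univ.pi fun i => Set.Ico (a i) (b i)) ≠ ⊤ := fun a b => by
    rw [Real.volume_pi_Ico]
    exact ENNReal.prod_ne_top fun i _ => ENNReal.ofReal_ne_top
  have hmeas : ∀ a b : Fin d → ℝ,
      MeasurableSet (Set.univ.pi fun i => Set.Ico (a i) (b i)) := fun a b =>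
    MeasurableSet.univ_pi fun i => measurableSet_Ico
  have hint : ∀ a b : Fin d → ℝ,
      IntegrableOn f (Set.univ.pi fun i => Set.Ico (a i) (b i)) := fun a b =>
    (hf.integrableOn_isCompact (isCompact_univ_pi fun i => isCompact_Icc)).mono_set
      (Set.pi_mono fun i _ => Set.Ico_subset_Icc_self : _ ⊆ Set.univ.pi fun i => Set.Icc (a i) (b i))
  have hsub : ∀ a b : Fin d → ℝ, (∀ i, 0 ≤ a i) → (∀ i, b i ≤ 1) →
      (Set.univ.pi fun i => Set.Ico (a i) (b i)) ⊆ unitCube d := fun a b h1 h2 =>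
    Set.pi_mono fun i _ => Set.Ico_subset_Ico (h1 i) (h2 i)
  have hcube : volume.real (unitCube d) = 1 := by
    have := hvol (fun _ => 0) (fun _ => 1) (fun _ => zero_le_one)
    simpa [unitCube] using this
  have hone : ∀ {q q' : Set (Fin d → ℝ)}, q ⊆ q' → IsRect q' → q' ⊆ unitCube d →
      0 < volume.real q → volume.real q' ≤ 2 * volume.real q →
      |(⨍ x in q, f x) - ⨍ x in q', f x| ≤ 2 * C := by
    intro q q' h1 h2 h3 h4 h5
    obtain ⟨a, b, rfl⟩ := h2
    refine step_aux f C q _ h1 (hfin a b) h4 h5 (hint a b)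
      (hBMO _ ⟨a, b, rfl⟩ h3 ?_)
    have : 0 < volume.real (Set.univ.pi fun i => Set.Ico (a i) (b i)) :=
      lt_of_lt_of_le h4 (measureReal_mono h1 (hfin a b))
    exact (ENNReal.toReal_pos_iff.1 this).1
  have hrect : IsRect (unitCube d) := ⟨fun _ => 0, fun _ => 1, rfl⟩
  induction k with
  | zero =>
    intro a b ha hab hb h
    have hae : (Set.univ.pi fun i => Set.Ico (a i) (b i)) =ᵐ[volume] unitCube d := by
      refine ae_eq_of_subset_of_measure_ge (hsub a b ha hb) ?_
        (hmeas a b).nullMeasurableSet (hfin (fun _ => 0) (fun _ => 1))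
      refine (ENNReal.toReal_le_toReal (hfin (fun _ => 0) (fun _ => 1)) (hfin a b)).1 ?_
      change volume.real (unitCube d) ≤ volume.real _
      rw [hcube, hvol a b hab]
      simpa using h
    rw [setAverage_congr hae]
    simp
  | succ k ih =>
    intro a b ha hab hb h
    have hv := hvol a b hab
    have hpos : 0 < ∏ i, (b i - a i) := by
      by_contra h'
      push Not at h'
      have : (0 : ℝ) < 2 ^ (k + 1) := by positivity
      nlinarith
    by_cases hbig : 1 / 2 ≤ ∏ i, (b i - a i)
    · have := hone (hsub a b ha hb) hrect subset_rfl (by rw [hv]; exact hpos)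
        (by rw [hv, hcube]; linarith)
      refine this.trans ?_
      push_cast
      have : 0 ≤ (k : ℝ) * C := by positivity
      linarith
    · push Not at hbig
      have hcont : ContinuousOn (fun t : ℝ => ∏ i, (((1 - t) * b i + t) - (1 - t) * a i))
          (Set.Icc 0 1) := by fun_prop
      have hivt := intermediate_value_Icc (zero_le_one' ℝ) hcont
      obtain ⟨t, ⟨ht0, ht1⟩, ht⟩ := hivt (show 2 * ∏ i, (b i - a i) ∈ _ by
        constructor
        · simp; linarith
        · simp; linarith)
      simp only at ht
      set a' : Fin d → ℝ := fun i => (1 - t) * a i with ha'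
      set b' : Fin d → ℝ := fun i => (1 - t) * b i + t with hb'
      have h1 : ∀ i, 0 ≤ a' i := fun i => mul_nonneg (by linarith) (ha i)
      have h2 : ∀ i, a' i ≤ a i := fun i => by
        have := ha i
        simp only [ha']; nlinarith
      have h3 : ∀ i, b i ≤ b' i := fun i => by
        have := hb i
        simp only [hb']; nlinarith
      have h4 : ∀ i, b' i ≤ 1 := fun i => by
        have := hb i
        simp only [hb']; nlinarith
      have h5 : ∀ i, a' i ≤ b' i := fun i => (h2 i).trans ((hab i).trans (h3 i))
      have hv' := hvol a' b' h5
      have ht' : ∏ i, (b' i - a' i) = 2 * ∏ i, (b i - a i) := ht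
      have i1 := hone (q := Set.univ.pi fun i => Set.Ico (a i) (b i))
        (q' := Set.univ.pi fun i => Set.Ico (a' i) (b' i))
        (Set.pi_mono fun i _ => Set.Ico_subset_Ico (h2 i) (h3 i)) ⟨a', b', rfl⟩
        (hsub a' b' h1 h4) (by rw [hv]; exact hpos) (by rw [hv, hv', ht'])
      have i2 := ih a' b' h1 h5 h4 (by rw [ht']; rw [pow_succ] at h; linarith)
      refine (abs_sub_le _ _ _).trans ((add_le_add i1 i2).trans ?_)
      push_cast
      linarith

/-- If `f` is locally integrable with BMO-type oscillation bound `C` over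
axis-parallel rectangles contained in `[0,1)^d`, `η ∈ (0,1]`, and `q ⊆ [0,1)^d` is an
axis-parallel rectangle with `μ(q) ≥ η`, then
`|⟨f⟩_q − ⟨f⟩_{[0,1)^d}| ≤ 2 ⌈log₂(1/η)⌉ C`. -/
theorem stmt5 (d : ℕ) (f : (Fin d → ℝ) → ℝ) (hf : LocallyIntegrable f volume)
    (C : ℝ) (hC : 0 ≤ C)
    (hBMO : ∀ q' : Set (Fin d → ℝ), IsRect q' → q' ⊆ unitCube d → 0 < volume q' →
      ⨍ x in q', |f x - ⨍ y in q', f y| ≤ C)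
    (η : ℝ) (hη0 : 0 < η) (hη1 : η ≤ 1)
    (q : Set (Fin d → ℝ)) (hq : IsRect q) (hqsub : q ⊆ unitCube d)
    (hqvol : ENNReal.ofReal η ≤ volume q) :
    |(⨍ x in q, f x) - ⨍ x in unitCube d, f x| ≤ 2 * (⌈Real.logb 2 (1 / η)⌉ : ℝ) * C := by
  obtain ⟨a, b, rfl⟩ := hq
  have hvpos : 0 < volume (Set.univ.pi fun i => Set.Ico (a i) (b i)) :=
    lt_of_lt_of_le (ENNReal.ofReal_pos.2 hη0) hqvol
  have hab : ∀ i, a i < b i := by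
    intro i
    by_contra h
    have : (Set.univ.pi fun i => Set.Ico (a i) (b i)) = ∅ :=
      Set.univ_pi_eq_empty (i := i) (Set.Ico_eq_empty h)
    rw [this] at hvpos
    simp at hvpos
  have hI : ∀ i, Set.Ico (a i) (b i) ⊆ Set.Ico (0 : ℝ) 1 := by
    rcases Set.pi_subset_pi_iff.1 hqsub with h | h
    · exact fun i => h i (Set.mem_univ i)
    · rw [h] at hvpos
      simp at hvpos
  have hI' := fun i => (Set.Ico_subset_Ico_iff (hab i)).1 (hI i)
  rw [Real.volume_pi_Ico, ← ENNReal.ofReal_prod_of_nonneg (fun i _ => sub_nonneg.2 (hab i).le),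
    ENNReal.ofReal_le_ofReal_iff
      (Finset.prod_nonneg fun i _ => sub_nonneg.2 (hab i).le)] at hqvol
  have hlog : 0 ≤ Real.logb 2 (1 / η) :=
    Real.logb_nonneg one_lt_two (by rw [le_div_iff₀ hη0]; linarith)
  obtain ⟨k, hk⟩ := Int.eq_ofNat_of_zero_le (Int.ceil_nonneg hlog)
  have hle : Real.logb 2 (1 / η) ≤ (k : ℝ) := by
    have := Int.le_ceil (Real.logb 2 (1 / η))
    rw [hk] at this
    exact_mod_cast this
  rw [Real.logb_le_iff_le_rpow one_lt_two (by positivity), Real.rpow_natCast,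
    div_le_iff₀ hη0] at hle
  have hmain := chain_aux d f hf C hC hBMO k a b (fun i => (hI' i).1) (fun i => (hab i).le)
    (fun i => (hI' i).2) (hle.trans (by gcongr))
  rw [hk]
  exact_mod_cast hmain
end
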